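/- Weak Hardy uncertainty principle: let a, b, M > 0 with ab ≥ 4, and let f : ℝ → ℂ be measurable with |f(x)| ≤ M e^{−a x²/2} for all x and |f̂(ξ)| ≤ M e^{−b ξ²/2} for all ξ. Then f = 0 almost everywhere. -/

import Mathlib

open MeasureTheory

/-!
The Gaussian bound on `f` makes `F z = ∫ e^{-ixz} f(x) dx` entire with
`‖F z‖ ≤ C e^{(Im z)² / (2a)}`, while the bound on `f̂` reads `‖F ξ‖ ≤ C e^{-b ξ² / 2}` on the real
line. Multiply `F` by `e^{(b/2 - iT) z²}` with `T` large. The product is bounded on the positive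
real axis, and on a ray of argument `θ < π / 2` close enough to `π / 2`, because `1 / a < b` makes
its exponent negative on the imaginary axis. Since the order `2` is below `π / θ`,
Phragmén–Lindelöf bounds the product in the sector between the two rays by a constant independent
of `T`, that is, `‖F z‖ ≤ C e^{-Re (b z² / 2) - T Im z²}`. Letting `T → ∞` gives `F = 0` on the open
first quadrant, hence everywhere, and `f = 0` by uniqueness of the Fourier transform.
-/

open Complex Filter Set
open scoped ContDiff FourierTransform Real Topology

variable {E : Type*} [NormedAddCommGroup E] [NormedSpace ℂ E]

section EntireFunctions

theorem norm_le_of_norm_le_on_sector_boundary {g : ℂ → E} (hg : Differentiable ℂ g)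
    {θ c A B C : ℝ} (hc : 0 ≤ c) (hcθ : c < π / θ)
    (hgrowth : ∀ z, ‖g z‖ ≤ A * Real.exp (B * ‖z‖ ^ c))
    (hreal : ∀ r : ℝ, 0 ≤ r → ‖g r‖ ≤ C) (hray : ∀ r : ℝ, 0 ≤ r → ‖g (r * exp (θ * I))‖ ≤ C)
    {z : ℂ} (hz₀ : 0 ≤ z.arg) (hzθ : z.arg ≤ θ) : ‖g z‖ ≤ C := by
  rcases eq_or_ne z 0 with rfl | hz
  · exact_mod_cast hreal 0 le_rfl
  have exp_eq (ζ : ℂ) : exp ζ = (Real.exp ζ.re : ℝ) * exp (ζ.im * I) := by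
    rw [ofReal_exp, ← Complex.exp_add, re_add_im]
  rw [← exp_log hz]
  refine PhragmenLindelof.horizontal_strip (f := g ∘ exp) (a := 0) (b := θ)
    (hg.comp differentiable_exp).diffContOnCl ⟨c, by rwa [sub_zero], |B|, ?_⟩ ?_ ?_
    (by rwa [log_im]) (by rwa [log_im])
  · refine .of_bound A (.of_forall fun ζ ↦ (hgrowth _).trans ?_)
    have hA : 0 ≤ A := nonneg_of_mul_nonneg_left ((norm_nonneg _).trans (hgrowth 0)) (by positivity)
    rw [Real.norm_eq_abs, Real.abs_exp, norm_exp, ← Real.exp_mul, mul_comm ζ.re]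
    gcongr
    exacts [le_abs_self B, le_abs_self ζ.re]
  · intro ζ hζ
    rw [Function.comp_apply, exp_eq, hζ, ofReal_zero, zero_mul, Complex.exp_zero, mul_one]
    exact hreal _ (Real.exp_pos _).le
  · intro ζ hζ
    rw [Function.comp_apply, exp_eq, hζ]
    exact hray _ (Real.exp_pos _).le

theorem re_sub_mul_I_mul_sq (β T : ℝ) (z : ℂ) :
    ((β - T * I) * z ^ 2).re = β * (z.re ^ 2 - z.im ^ 2) + 2 * T * z.re * z.im := by
  simp only [pow_two, mul_re, sub_re, sub_im, mul_im, ofReal_re, ofReal_im, I_re, I_im]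
  ring

theorem exists_angle_exponent_nonpos {α β φ : ℝ} (hαβ : α < β) (hφ : φ < π / 2) (T : ℝ) :
    ∃ θ ∈ Ioo φ (π / 2), α * Real.sin θ ^ 2 + (β * (Real.cos θ ^ 2 - Real.sin θ ^ 2)
      + 2 * T * Real.cos θ * Real.sin θ) ≤ 0 := by
  set h : ℝ → ℝ := fun θ ↦ α * Real.sin θ ^ 2 +
    (β * (Real.cos θ ^ 2 - Real.sin θ ^ 2) + 2 * T * Real.cos θ * Real.sin θ) with h_def
  have hcont : Continuous h := by fun_prop
  have hneg : h (π / 2) < 0 := by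
    simp only [h_def, Real.sin_pi_div_two, Real.cos_pi_div_two]
    linarith
  have hleft : ∀ᶠ θ in 𝓝[<] (π / 2), h θ < 0 :=
    (hcont.continuousAt.eventually_lt_const hneg).filter_mono nhdsWithin_le_nhds
  have hIoo : ∀ᶠ θ in 𝓝[<] (π / 2), θ ∈ Ioo φ (π / 2) := Ioo_mem_nhdsLT hφ
  obtain ⟨θ, hθ, hθneg⟩ := (hIoo.and hleft).exists
  exact ⟨θ, hθ, hθneg.le⟩

variable {F : ℂ → E} {α β C : ℝ}

theorem norm_exp_mul_sq_smul_le (hgrowth : ∀ z, ‖F z‖ ≤ C * Real.exp (α * z.im ^ 2)) (μ z : ℂ) :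
    ‖exp (μ * z ^ 2) • F z‖ ≤ C * Real.exp ((‖μ‖ + |α|) * ‖z‖ ^ 2) := by
  have hC : 0 ≤ C := nonneg_of_mul_nonneg_left ((norm_nonneg _).trans (hgrowth 0)) (by positivity)
  have hexp : ‖exp (μ * z ^ 2)‖ ≤ Real.exp (‖μ‖ * ‖z‖ ^ 2) :=
    (norm_exp_le_exp_norm _).trans_eq (by rw [norm_mul, norm_pow])
  have hexponent : α * z.im ^ 2 ≤ |α| * ‖z‖ ^ 2 :=
    mul_le_mul (le_abs_self α) (sq_le_sq.2 (by simpa using abs_im_le_norm z)) (sq_nonneg _)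
      (abs_nonneg α)
  calc ‖exp (μ * z ^ 2) • F z‖
      ≤ Real.exp (‖μ‖ * ‖z‖ ^ 2) * (C * Real.exp (|α| * ‖z‖ ^ 2)) := by
        rw [norm_smul]
        gcongr
        exact (hgrowth z).trans (by gcongr)
    _ = C * Real.exp ((‖μ‖ + |α|) * ‖z‖ ^ 2) := by rw [mul_left_comm, ← Real.exp_add, add_mul]

theorem norm_le_mul_exp_of_re_pos_of_im_nonneg (hF : Differentiable ℂ F) (hαβ : α < β)
    (hgrowth : ∀ z, ‖F z‖ ≤ C * Real.exp (α * z.im ^ 2))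
    (hdecay : ∀ r : ℝ, 0 ≤ r → ‖F r‖ ≤ C * Real.exp (-β * r ^ 2))
    (T : ℝ) {z : ℂ} (hre : 0 < z.re) (him : 0 ≤ z.im) :
    ‖F z‖ ≤ C * Real.exp (-(β * (z.re ^ 2 - z.im ^ 2) + 2 * T * z.re * z.im)) := by
  have hC : 0 ≤ C := nonneg_of_mul_nonneg_left ((norm_nonneg _).trans (hgrowth 0)) (by positivity)
  have harg : z.arg < π / 2 := (abs_lt.1 (abs_arg_lt_pi_div_two_iff.2 (.inl hre))).2
  have harg₀ : 0 ≤ z.arg := arg_nonneg_iff.2 him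
  obtain ⟨θ, ⟨hzθ, hθ⟩, hexponent⟩ := exists_angle_exponent_nonpos hαβ harg T
  set G : ℂ → E := fun w ↦ exp ((β - T * I) * w ^ 2) • F w with hG
  have norm_G (w : ℂ) : ‖G w‖ = Real.exp ((β - T * I) * w ^ 2).re * ‖F w‖ := by
    rw [hG, norm_smul, norm_exp]
  have hGgrowth (w : ℂ) : ‖G w‖ ≤ C * Real.exp ((‖(β - T * I : ℂ)‖ + |α|) * ‖w‖ ^ (2 : ℝ)) := by
    rw [Real.rpow_two]
    exact norm_exp_mul_sq_smul_le hgrowth _ w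
  have hGreal (r : ℝ) (hr : 0 ≤ r) : ‖G r‖ ≤ C := by
    rw [norm_G, re_sub_mul_I_mul_sq, ofReal_re, ofReal_im]
    calc _ ≤ Real.exp (β * (r ^ 2 - 0 ^ 2) + 2 * T * r * 0) * (C * Real.exp (-β * r ^ 2)) := by
          gcongr
          exact hdecay r hr
      _ = C * Real.exp 0 := by rw [mul_left_comm, ← Real.exp_add]; ring_nf
      _ = C := by rw [Real.exp_zero, mul_one]
  have hGray (r : ℝ) : ‖G (r * exp (θ * I))‖ ≤ C := by
    rw [norm_G, re_sub_mul_I_mul_sq]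
    refine (mul_le_mul_of_nonneg_left (hgrowth _) (Real.exp_pos _).le).trans ?_
    rw [re_ofReal_mul, im_ofReal_mul, exp_ofReal_mul_I_re, exp_ofReal_mul_I_im, mul_left_comm,
      ← Real.exp_add]
    refine mul_le_of_le_one_right hC (Real.exp_le_one_iff.2 ?_)
    linarith [mul_nonpos_of_nonneg_of_nonpos (sq_nonneg r) hexponent]
  have hGz : ‖G z‖ ≤ C :=
    norm_le_of_norm_le_on_sector_boundary (by fun_prop) zero_le_two
      ((lt_div_iff₀ (harg₀.trans_lt hzθ)).2 (by linarith)) hGgrowth hGreal (fun r _ ↦ hGray r)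
      harg₀ hzθ.le
  rwa [norm_G, re_sub_mul_I_mul_sq, mul_comm, ← le_div_iff₀ (Real.exp_pos _), div_eq_mul_inv,
    ← Real.exp_neg] at hGz

theorem eq_zero_of_re_pos_of_im_pos (hF : Differentiable ℂ F) (hαβ : α < β)
    (hgrowth : ∀ z, ‖F z‖ ≤ C * Real.exp (α * z.im ^ 2))
    (hdecay : ∀ r : ℝ, 0 ≤ r → ‖F r‖ ≤ C * Real.exp (-β * r ^ 2))
    {z : ℂ} (hre : 0 < z.re) (him : 0 < z.im) : F z = 0 := by
  have hexponent : Tendsto (fun T ↦ β * (z.re ^ 2 - z.im ^ 2) + 2 * T * z.re * z.im) atTop atTop :=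
    tendsto_atTop_add_const_left _ _ <| ((tendsto_id.const_mul_atTop two_pos).atTop_mul_const
      hre).atTop_mul_const him
  have hlim := (Real.tendsto_exp_neg_atTop_nhds_zero.comp hexponent).const_mul C
  rw [mul_zero] at hlim
  exact norm_le_zero_iff.1 <| ge_of_tendsto' hlim fun T ↦
    norm_le_mul_exp_of_re_pos_of_im_nonneg hF hαβ hgrowth hdecay T hre him.le

theorem eq_zero_of_norm_le_exp_im_sq_of_norm_le_exp_neg_sq [CompleteSpace E]
    (hF : Differentiable ℂ F) (hαβ : α < β)
    (hgrowth : ∀ z, ‖F z‖ ≤ C * Real.exp (α * z.im ^ 2))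
    (hdecay : ∀ r : ℝ, 0 ≤ r → ‖F r‖ ≤ C * Real.exp (-β * r ^ 2)) : F = 0 := by
  refine AnalyticOnNhd.eq_of_eventuallyEq (z₀ := 1 + I) (fun z _ ↦ hF.analyticAt z)
    (fun z _ ↦ analyticAt_const) ?_
  have hre : ∀ᶠ z : ℂ in 𝓝 (1 + I), 0 < z.re :=
    continuous_re.continuousAt.eventually_const_lt (by simp)
  have him : ∀ᶠ z : ℂ in 𝓝 (1 + I), 0 < z.im :=
    continuous_im.continuousAt.eventually_const_lt (by simp)
  filter_upwards [hre, him] with z hzre hzim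
  exact eq_zero_of_re_pos_of_im_pos hF hαβ hgrowth hdecay hzre hzim

end EntireFunctions

theorem ae_eq_zero_of_fourier_eq_zero [CompleteSpace E] {V : Type*} [NormedAddCommGroup V]
    [InnerProductSpace ℝ V] [FiniteDimensional ℝ V] [MeasurableSpace V] [BorelSpace V]
    {f : V → E} (hf : Integrable f) (hfourier : 𝓕 f = 0) : f =ᵐ[volume] 0 := by
  refine ae_eq_zero_of_integral_contDiff_smul_eq_zero hf.locallyIntegrable fun g hg hgc ↦ ?_
  have hgc' : HasCompactSupport (ofRealCLM ∘ g) := hgc.comp_left rfl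
  have hg' : ContDiff ℝ ∞ (ofRealCLM ∘ g) := ofRealCLM.contDiff.comp hg
  set φ : SchwartzMap V ℂ := hgc'.toSchwartzMap hg'
  set ψ : SchwartzMap V ℂ := 𝓕⁻ φ
  have hψ : 𝓕 (ψ : V → ℂ) = φ := by
    rw [← SchwartzMap.fourier_coe, FourierTransform.fourier_fourierInv_eq]
  calc ∫ x, g x • f x = ∫ x, 𝓕 (ψ : V → ℂ) x • f x := by rw [hψ]; rfl
    _ = ∫ x, ψ x • 𝓕 f x := by
      simpa using! VectorFourier.integral_fourierIntegral_smul_eq_flip (L := innerₗ V)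
        Real.continuous_fourierChar continuous_inner ψ.integrable hf
    _ = 0 := by simp only [hfourier, Pi.zero_apply, smul_zero, integral_zero]

section FourierLaplace

/-- The Fourier–Laplace transform `z ↦ ∫ e^{-ixz} f(x) dx`, which extends `√(2π) f̂` to complex
arguments. -/
noncomputable def fourierLaplace (f : ℝ → E) (z : ℂ) : E :=
  ∫ x : ℝ, exp (-(I * x * z)) • f x

theorem norm_exp_neg_I_mul_mul (x : ℝ) (z : ℂ) : ‖exp (-(I * x * z))‖ = Real.exp (x * z.im) := by
  simp [norm_exp]

theorem norm_exp_neg_I_mul_mul_le {z : ℂ} {R : ℝ} (hz : ‖z‖ ≤ R) (x : ℝ) :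
    ‖exp (-(I * x * z))‖ ≤ Real.exp (R * |x|) := by
  rw [norm_exp_neg_I_mul_mul, Real.exp_le_exp]
  calc x * z.im ≤ |x| * |z.im| := (le_abs_self _).trans (abs_mul _ _).le
    _ ≤ R * |x| := by rw [mul_comm]; gcongr; exact (abs_im_le_norm z).trans hz

variable {f : ℝ → E}

theorem fourier_eq_fourierLaplace (ξ : ℝ) : 𝓕 f ξ = fourierLaplace f (2 * π * ξ) := by
  rw [Real.fourier_real_eq_integral_exp_smul, fourierLaplace]
  congr! 4
  push_cast
  ring

theorem differentiable_fourierLaplace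
    (hf : ∀ c : ℝ, Integrable fun x ↦ Real.exp (c * |x|) • f x) :
    Differentiable ℂ (fourierLaplace f) := by
  have hmeas : AEStronglyMeasurable f := by simpa using (hf 0).aestronglyMeasurable
  have hkernel_meas (z : ℂ) : AEStronglyMeasurable fun x : ℝ ↦ exp (-(I * x * z)) • f x :=
    (by fun_prop : Continuous fun x : ℝ ↦ exp (-(I * x * z))).aestronglyMeasurable.smul hmeas
  intro z₀
  refine (hasDerivAt_integral_of_dominated_loc_of_deriv_le (Metric.ball_mem_nhds z₀ one_pos)
    (.of_forall hkernel_meas) ((hf ‖z₀‖).mono (hkernel_meas z₀) (.of_forall fun x ↦ ?_))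
    (F' := fun z x ↦ (exp (-(I * x * z)) * -(I * x)) • f x)
    (bound := fun x ↦ ‖Real.exp ((‖z₀‖ + 2) * |x|) • f x‖)
    ?_ (.of_forall fun x z hz ↦ ?_) (hf _).norm (.of_forall fun x z _ ↦ ?_)).2.differentiableAt
  · rw [norm_smul, norm_smul, Real.norm_eq_abs, Real.abs_exp]
    gcongr
    exact norm_exp_neg_I_mul_mul_le le_rfl x
  · exact (by fun_prop : Continuous fun x : ℝ ↦
      exp (-(I * x * z₀)) * -(I * x)).aestronglyMeasurable.smul hmeas
  · have hz' : ‖z‖ ≤ ‖z₀‖ + 1 := by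
      linarith [norm_le_norm_add_norm_sub' z z₀, mem_ball_iff_norm.1 hz]
    rw [norm_smul, norm_smul, Real.norm_eq_abs, Real.abs_exp]
    gcongr
    calc ‖exp (-(I * x * z)) * -(I * x)‖ ≤ Real.exp ((‖z₀‖ + 1) * |x|) * Real.exp |x| := by
          rw [norm_mul, norm_neg, norm_mul, norm_I, one_mul, norm_real, Real.norm_eq_abs]
          gcongr
          · exact norm_exp_neg_I_mul_mul_le hz' x
          · linarith [Real.add_one_le_exp |x|]
      _ = Real.exp ((‖z₀‖ + 2) * |x|) := by rw [← Real.exp_add]; ring_nf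
  · have hexponent : HasDerivAt (fun z : ℂ ↦ -(I * x * z)) (-(I * x)) z := by
      simpa using! ((hasDerivAt_id z).const_mul (I * (x : ℂ))).neg
    exact hexponent.cexp.smul_const (f x)

variable {a M : ℝ}

theorem integrable_exp_mul_abs_smul_of_norm_le_gaussian (ha : 0 < a) (hf : AEStronglyMeasurable f)
    (hfbound : ∀ᵐ x, ‖f x‖ ≤ M * Real.exp (-a * x ^ 2 / 2)) (c : ℝ) :
    Integrable fun x ↦ Real.exp (c * |x|) • f x := by
  have hexponent (x : ℝ) : c * |x| + -a * x ^ 2 / 2 ≤ c ^ 2 / a + -(a / 4) * x ^ 2 := by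
    have hsq : c ^ 2 / a + -(a / 4) * x ^ 2 - (c * |x| + -a * x ^ 2 / 2)
        = (c - a * |x| / 2) ^ 2 / a := by
      rw [← sq_abs x]
      field_simp
      ring
    linarith [show 0 ≤ (c - a * |x| / 2) ^ 2 / a by positivity]
  refine ((integrable_exp_neg_mul_sq (by positivity : 0 < a / 4)).const_mul
    (M * Real.exp (c ^ 2 / a))).mono' ?_ ?_
  · exact (by fun_prop : Continuous fun x : ℝ ↦ Real.exp (c * |x|)).aestronglyMeasurable.smul hf
  filter_upwards [hfbound] with x hx
  have hM : 0 ≤ M := nonneg_of_mul_nonneg_left ((norm_nonneg _).trans hx) (by positivity)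
  rw [norm_smul, Real.norm_eq_abs, Real.abs_exp]
  calc Real.exp (c * |x|) * ‖f x‖
    _ ≤ Real.exp (c * |x|) * (M * Real.exp (-a * x ^ 2 / 2)) := by gcongr
    _ = M * Real.exp (c * |x| + -a * x ^ 2 / 2) := by rw [mul_left_comm, ← Real.exp_add]
    _ ≤ M * Real.exp (c ^ 2 / a + -(a / 4) * x ^ 2) := by
      gcongr M * Real.exp ?_
      exact hexponent x
    _ = M * Real.exp (c ^ 2 / a) * Real.exp (-(a / 4) * x ^ 2) := by rw [Real.exp_add, mul_assoc]

theorem norm_fourierLaplace_le_of_norm_le_gaussian (ha : 0 < a)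
    (hfbound : ∀ᵐ x, ‖f x‖ ≤ M * Real.exp (-a * x ^ 2 / 2)) (z : ℂ) :
    ‖fourierLaplace f z‖ ≤ M * √(π / (a / 2)) * Real.exp (1 / (2 * a) * z.im ^ 2) := by
  set K := M * Real.exp (1 / (2 * a) * z.im ^ 2) with hK
  have hint : Integrable fun x : ℝ ↦ K * Real.exp (-(a / 2) * (x - z.im / a) ^ 2) :=
    ((integrable_exp_neg_mul_sq (half_pos ha)).comp_sub_right (z.im / a)).const_mul K
  have hbound : ∀ᵐ x : ℝ, ‖exp (-(I * x * z)) • f x‖ ≤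
      K * Real.exp (-(a / 2) * (x - z.im / a) ^ 2) := by
    filter_upwards [hfbound] with x hx
    rw [norm_smul, norm_exp_neg_I_mul_mul]
    calc _ ≤ Real.exp (x * z.im) * (M * Real.exp (-a * x ^ 2 / 2)) := by gcongr
      _ = K * Real.exp (-(a / 2) * (x - z.im / a) ^ 2) := by
        rw [hK, mul_left_comm, mul_assoc, ← Real.exp_add, ← Real.exp_add]
        congr 2
        field_simp
        ring
  calc ‖fourierLaplace f z‖ ≤ ∫ x, K * Real.exp (-(a / 2) * (x - z.im / a) ^ 2) :=
        norm_integral_le_of_norm_le hint hbound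
    _ = K * √(π / (a / 2)) := by
      rw [integral_const_mul, integral_sub_right_eq_self fun x ↦ Real.exp (-(a / 2) * x ^ 2),
        integral_gaussian]
    _ = M * √(π / (a / 2)) * Real.exp (1 / (2 * a) * z.im ^ 2) := by rw [hK, mul_right_comm]

end FourierLaplace

theorem weak_hardy_uncertainty_general [CompleteSpace E] {a b M : ℝ} (ha : 0 < a)
    (hab : 1 < a * b) {f : ℝ → E} (hf : AEStronglyMeasurable f)
    (hfbound : ∀ᵐ x, ‖f x‖ ≤ M * Real.exp (-a * x ^ 2 / 2))
    (hfhat : ∀ ξ : ℝ, ‖(√(2 * π) : ℂ)⁻¹ • fourierLaplace f ξ‖ ≤ M * Real.exp (-b * ξ ^ 2 / 2)) :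
    f =ᵐ[volume] 0 := by
  have hintegrable := integrable_exp_mul_abs_smul_of_norm_le_gaussian ha hf hfbound
  set C := max (M * √(π / (a / 2))) (√(2 * π) * M)
  have hgrowth (z : ℂ) : ‖fourierLaplace f z‖ ≤ C * Real.exp (1 / (2 * a) * z.im ^ 2) := by
    refine (norm_fourierLaplace_le_of_norm_le_gaussian ha hfbound z).trans ?_
    gcongr
    exact le_max_left _ _
  have hdecay (ξ : ℝ) : ‖fourierLaplace f ξ‖ ≤ C * Real.exp (-(b / 2) * ξ ^ 2) := by
    have hξ := hfhat ξ
    rw [norm_smul, norm_inv, norm_real, Real.norm_of_nonneg (by positivity),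
      inv_mul_le_iff₀ (by positivity), ← mul_assoc, neg_mul, neg_div, mul_div_right_comm,
      ← neg_mul] at hξ
    exact hξ.trans (by gcongr; exact le_max_right _ _)
  have hzero : fourierLaplace f = 0 := eq_zero_of_norm_le_exp_im_sq_of_norm_le_exp_neg_sq
    (differentiable_fourierLaplace hintegrable) (β := b / 2)
    (by rw [div_lt_iff₀ (by positivity)]; linarith) hgrowth fun r _ ↦ hdecay r
  refine ae_eq_zero_of_fourier_eq_zero (by simpa using hintegrable 0) (funext fun ξ ↦ ?_)
  rw [fourier_eq_fourierLaplace, hzero, Pi.zero_apply, Pi.zero_apply]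

theorem weak_hardy_uncertainty (a b M : ℝ) (ha : 0 < a) (hb : 0 < b) (hM : 0 < M)
    (hab : 4 ≤ a * b) (f : ℝ → ℂ) (hf : Measurable f)
    (hfbound : ∀ x : ℝ, ‖f x‖ ≤ M * Real.exp (-a * x ^ 2 / 2))
    (hfhat : ∀ ξ : ℝ, ‖(Real.sqrt (2 * Real.pi) : ℂ)⁻¹ *
        ∫ x : ℝ, Complex.exp (-(Complex.I * x * ξ)) * f x‖ ≤ M * Real.exp (-b * ξ ^ 2 / 2)) :
    f =ᵐ[volume] 0 :=
  weak_hardy_uncertainty_general ha (by linarith) hf.aestronglyMeasurable (.of_forall hfbound) hfhat
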